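/- Suppose G is connected and p > r + 2, and set C_p = 2(p + r − 2)/(p − r − 2). Then every second-order critical point Y of the rank-p problem satisfies rank(Y) ≤ r + 5 C_p² (‖Δ‖/λ₂)² r n. If moreover p > r + 5 C_p² (‖Δ‖/λ₂)² r n, then Y is a global minimizer of the rank-p problem (⟨L̂, Y Yᵀ⟩ ≤ ⟨L̂, Y′Y′ᵀ⟩ for every feasible Y′) and Y Yᵀ is an optimal solution of the SDP relaxation. -/

import Mathlib

open Matrix MeasureTheory ProbabilityTheory
open scoped Kronecker BigOperators

namespace SyncPaper

variable {α : Type*}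

/-- The `i`-th `r × p` row-block of a block matrix `Y ∈ α^{rn × p}`. -/
def blk {n r p : ℕ} (Y : Matrix (Fin n × Fin r) (Fin p) α) (i : Fin n) :
    Matrix (Fin r) (Fin p) α :=
  Matrix.of fun a b => Y (i, a) b

/-- `Y` is feasible: every `r × p` row-block has orthonormal rows. -/
def Feasible {n r p : ℕ} (Y : Matrix (Fin n × Fin r) (Fin p) ℝ) : Prop :=
  ∀ i, blk Y i * (blk Y i)ᵀ = 1

/-- Symmetric block-diagonal projection: keeps the symmetric part of each `r × r`
diagonal block and zeroes out all off-diagonal blocks. -/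
noncomputable def SBD {n r : ℕ} (M : Matrix (Fin n × Fin r) (Fin n × Fin r) ℝ) :
    Matrix (Fin n × Fin r) (Fin n × Fin r) ℝ :=
  Matrix.of fun q q' => if q.1 = q'.1 then (M q q' + M q' q) / 2 else 0

/-- The matrix `S(Y) = L̂ − SBD(L̂ Y Yᵀ)`. -/
noncomputable def Smat {n r p : ℕ} (Lhat : Matrix (Fin n × Fin r) (Fin n × Fin r) ℝ)
    (Y : Matrix (Fin n × Fin r) (Fin p) ℝ) :
    Matrix (Fin n × Fin r) (Fin n × Fin r) ℝ :=
  Lhat - SBD (Lhat * Y * Yᵀ)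

/-- Second-order critical point of the rank-`p` problem `min ⟨L̂, Y Yᵀ⟩` over feasible `Y`. -/
def IsSecondOrderCritical {n r p : ℕ} (Lhat : Matrix (Fin n × Fin r) (Fin n × Fin r) ℝ)
    (Y : Matrix (Fin n × Fin r) (Fin p) ℝ) : Prop :=
  Feasible Y ∧ Smat Lhat Y * Y = 0 ∧
    ∀ Ydot : Matrix (Fin n × Fin r) (Fin p) ℝ,
      (∀ i, blk Ydot i * (blk Y i)ᵀ + blk Y i * (blk Ydot i)ᵀ = 0) →
      0 ≤ (Smat Lhat Y * Ydot * Ydotᵀ).trace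

/-- The stacked ground truth `Z ∈ ℝ^{rn × r}`. -/
def Zstack {n r : ℕ} (Zb : Fin n → Matrix (Fin r) (Fin r) ℝ) :
    Matrix (Fin n × Fin r) (Fin r) ℝ :=
  Matrix.of fun q b => Zb q.1 q.2 b

/-- The block-diagonal matrix `D` with diagonal blocks `Z_1, …, Z_n`. -/
def Dmat {n r : ℕ} (Zb : Fin n → Matrix (Fin r) (Fin r) ℝ) :
    Matrix (Fin n × Fin r) (Fin n × Fin r) ℝ :=
  Matrix.of fun q q' => if q.1 = q'.1 then Zb q.1 q.2 q'.2 else 0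

/-- `L_Z = D (L ⊗ I_r) Dᵀ`. -/
def LZmat {n r : ℕ} (L : Matrix (Fin n) (Fin n) ℝ) (Zb : Fin n → Matrix (Fin r) (Fin r) ℝ) :
    Matrix (Fin n × Fin r) (Fin n × Fin r) ℝ :=
  Dmat Zb * (L ⊗ₖ (1 : Matrix (Fin r) (Fin r) ℝ)) * (Dmat Zb)ᵀ

/-- The ℓ₂→ℓ₂ operator norm of a matrix. -/
noncomputable def opNorm {m m' : Type*} [Fintype m] [Fintype m'] [DecidableEq m']
    (M : Matrix m m' ℝ) : ℝ :=
  ‖(Matrix.toEuclideanLin (𝕜 := ℝ) (m := m) (n := m')).trans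
      LinearMap.toContinuousLinearMap M‖

/-- The second-smallest eigenvalue of a connected graph Laplacian, via the variational
(Courant–Fischer) characterization: the minimum of the quadratic form over unit vectors
orthogonal to the all-ones vector. -/
noncomputable def lam2 {n : ℕ} (L : Matrix (Fin n) (Fin n) ℝ) : ℝ :=
  sInf {t : ℝ | ∃ x : Fin n → ℝ, (∑ i, x i = 0) ∧ (∑ i, (x i) ^ 2 = 1) ∧ t = x ⬝ᵥ (L *ᵥ x)}

/-- Squared Frobenius norm of a real matrix. -/
def frobSq {m m' : Type*} [Fintype m] [Fintype m'] (M : Matrix m m' ℝ) : ℝ :=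
  ∑ i, ∑ j, (M i j) ^ 2

/-- The inner product `⟨A, B⟩ = tr(A Bᵀ)`. -/
def ip {m : Type*} [Fintype m] (A B : Matrix m m ℝ) : ℝ := (A * Bᵀ).trace

/-- Feasibility for the SDP relaxation. -/
def SDPFeasible {n r : ℕ} (X : Matrix (Fin n × Fin r) (Fin n × Fin r) ℝ) : Prop :=
  X.PosSemidef ∧ SBD X = 1

end SyncPaper

namespace SyncPaper

/-!
Conjugating the cost by `D` and multiplying every block `Yᵢ` by `Zᵢᵀ` preserves second-order
criticality, rank and `‖Δ‖`, so the cost may be taken to be `L ⊗ I - Δ`.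

Test the second-order condition on the tangent directions `G - Yᵢ Gᵀ Yᵢ`, with `G` the same for all
`i`, and sum over an orthonormal basis of matrices `G`. This gives
`(p - r - 2) ⟨L ⊗ I, Y Yᵀ⟩ ≤ ⟨Δ, R⟩`, where `R` vanishes when all blocks of `Y` agree. Comparing `Y`
with the `n` copies of its block `Yₖ` bounds `⟨Δ, R⟩` by a multiple of
`‖Δ‖ (∑ᵢ ‖Yᵢ - Yₖ‖²)^(1/2)`; averaging the square over `k` and applying the Poincaré inequality of
the graph yields `λ₂ ⟨L ⊗ I, Y Yᵀ⟩ ≤ 2 C_p² ‖Δ‖² r n`.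

The columns of `Y` span at least `rank Y - r` orthonormal vectors whose blocks sum to zero. On these
`L ⊗ I` is at least `λ₂`, whereas `S(Y)` annihilates them, and the two remaining terms of `S(Y)` are
controlled by `‖Δ‖` and by the energy bound above: this limits their number. Finally, if
`rank Y < p`, the directions `x uᵀ` with `Y u = 0` show that `S(Y)` is positive semidefinite, which
makes it a dual certificate for the SDP.
-/

section Frobenius

variable {ι κ τ : Type*} [Fintype ι] [Fintype κ] [Fintype τ]

lemma frobSq_nonneg (M : Matrix ι κ ℝ) : 0 ≤ frobSq M :=
  Finset.sum_nonneg fun _ _ => Finset.sum_nonneg fun _ _ => sq_nonneg _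

lemma frobSq_eq_trace (M : Matrix ι κ ℝ) : frobSq M = (M * Mᵀ).trace := by
  simp only [frobSq, trace, diag_apply, mul_apply, transpose_apply, sq]

lemma sq_trace_mul_transpose_le (M N : Matrix ι κ ℝ) :
    (M * Nᵀ).trace ^ 2 ≤ frobSq M * frobSq N := by
  simp only [frobSq, trace, diag_apply, mul_apply, transpose_apply, ← Fintype.sum_prod_type']
  exact Finset.sum_mul_sq_le_sq_mul_sq _ _ _

lemma frobSq_add_le (A B : Matrix ι κ ℝ) : frobSq (A + B) ≤ 2 * (frobSq A + frobSq B) := by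
  simp only [frobSq, ← Finset.sum_add_distrib, Finset.mul_sum, Matrix.add_apply]
  gcongr
  exact add_sq_le

lemma trace_mul_gram_sub_gram {M : Matrix κ κ ℝ} (hM : Mᵀ = M) (A B : Matrix κ τ ℝ) :
    (M * (A * Aᵀ - B * Bᵀ)).trace = (M * (A + B) * (A - B)ᵀ).trace := by
  have cross : (M * A * Bᵀ).trace = (M * B * Aᵀ).trace := by
    rw [← trace_transpose, transpose_mul, transpose_mul, hM, transpose_transpose,
      ← Matrix.mul_assoc, trace_mul_cycle, Matrix.mul_assoc]
  simp only [transpose_sub, Matrix.mul_sub, Matrix.mul_add, Matrix.add_mul, trace_sub, trace_add,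
    ← Matrix.mul_assoc, cross]
  ring

variable [DecidableEq κ]

open scoped Matrix.Norms.L2Operator

lemma opNorm_eq_norm (M : Matrix ι κ ℝ) : opNorm M = ‖M‖ := rfl

lemma opNorm_nonneg (M : Matrix ι κ ℝ) : 0 ≤ opNorm M := norm_nonneg _

lemma frobSq_mul_le (A : Matrix ι κ ℝ) (B : Matrix κ τ ℝ) :
    frobSq (A * B) ≤ opNorm A ^ 2 * frobSq B := by
  have column (k : τ) : ∑ i, (A * B) i k ^ 2 ≤ opNorm A ^ 2 * ∑ j, B j k ^ 2 := by
    have h := pow_le_pow_left₀ (norm_nonneg _) (l2_opNorm_mulVec A (WithLp.toLp 2 (Bᵀ k))) 2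
    rw [mul_pow, EuclideanSpace.real_norm_sq_eq, EuclideanSpace.real_norm_sq_eq] at h
    exact h
  rw [frobSq, frobSq, Finset.sum_comm, Finset.sum_comm (f := fun j k => B j k ^ 2),
    Finset.mul_sum]
  exact Finset.sum_le_sum fun k _ => column k

lemma sq_trace_mul_mul_transpose_le (M : Matrix ι κ ℝ) (A : Matrix κ τ ℝ) (B : Matrix ι τ ℝ) :
    (M * A * Bᵀ).trace ^ 2 ≤ opNorm M ^ 2 * frobSq A * frobSq B :=
  (sq_trace_mul_transpose_le _ _).trans <|
    mul_le_mul_of_nonneg_right (frobSq_mul_le M A) (frobSq_nonneg B)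

lemma sq_trace_mul_gram_sub_gram_le {M : Matrix κ κ ℝ} (hM : Mᵀ = M) (A B : Matrix κ τ ℝ) :
    (M * (A * Aᵀ - B * Bᵀ)).trace ^ 2 ≤ opNorm M ^ 2 * frobSq (A + B) * frobSq (A - B) := by
  rw [trace_mul_gram_sub_gram hM]
  exact sq_trace_mul_mul_transpose_le _ _ _

lemma opNorm_transpose_mul_mul {Q : Matrix κ κ ℝ} (hQ : Q * Qᵀ = 1) (M : Matrix κ κ ℝ) :
    opNorm (Qᵀ * M * Q) = opNorm M := by
  have hQ' : Q ∈ unitary (Matrix κ κ ℝ) := by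
    rw [Unitary.mem_iff, star_eq_conjTranspose, conjTranspose_eq_transpose_of_trivial]
    exact ⟨mul_eq_one_comm.1 hQ, hQ⟩
  have hQt : Qᵀ ∈ unitary (Matrix κ κ ℝ) := by
    simpa [star_eq_conjTranspose] using Unitary.star_mem hQ'
  rw [opNorm_eq_norm, opNorm_eq_norm, CStarRing.norm_mul_mem_unitary _ hQ',
    CStarRing.norm_mem_unitary_mul _ hQt]

end Frobenius

section PosSemidef

lemma posSemidef_mul_transpose {ι κ : Type*} [Finite ι] [Fintype κ] (A : Matrix ι κ ℝ) :
    (A * Aᵀ).PosSemidef := by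
  simpa using posSemidef_self_mul_conjTranspose A

variable {ι κ τ : Type*} [Fintype ι] [Fintype κ] [Fintype τ]

open scoped MatrixOrder ComplexOrder in
lemma trace_mul_nonneg_of_posSemidef {P X : Matrix ι ι ℝ} (hP : P.PosSemidef)
    (hX : X.PosSemidef) : 0 ≤ (P * X).trace := by
  classical
  obtain ⟨B, rfl⟩ := CStarAlgebra.nonneg_iff_eq_star_mul_self.mp hX.nonneg
  rw [star_eq_conjTranspose, ← Matrix.mul_assoc, trace_mul_cycle]
  exact (hP.mul_mul_conjTranspose_same B).trace_nonneg

lemma trace_mul_gram_le_trace [DecidableEq κ] {P : Matrix ι ι ℝ} (hP : P.PosSemidef)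
    {U : Matrix ι κ ℝ} (hU : Uᵀ * U = 1) : (P * (U * Uᵀ)).trace ≤ P.trace := by
  classical
  have complement : 1 - U * Uᵀ = (1 - U * Uᵀ) * (1 - U * Uᵀ)ᵀ := by
    have idem : U * Uᵀ * (U * Uᵀ) = U * Uᵀ := by
      rw [Matrix.mul_assoc, ← Matrix.mul_assoc Uᵀ, hU, Matrix.one_mul]
    simp [Matrix.sub_mul, Matrix.mul_sub, idem]
  have h := trace_mul_nonneg_of_posSemidef hP (complement ▸ posSemidef_mul_transpose _)
  rwa [Matrix.mul_sub, Matrix.mul_one, trace_sub, sub_nonneg] at h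

lemma exists_orthonormal_columns_mem (K : Submodule ℝ (EuclideanSpace ℝ ι)) :
    ∃ U : Matrix ι (Fin (Module.finrank ℝ K)) ℝ,
      Uᵀ * U = 1 ∧ ∀ k, WithLp.toLp 2 (U.col k) ∈ K := by
  let b := stdOrthonormalBasis ℝ K
  have hb := orthonormal_iff_ite.1 b.orthonormal
  refine ⟨of fun i k => (b k : EuclideanSpace ℝ ι) i, ?_, fun k => (b k).2⟩
  ext k l
  rw [one_apply, ← hb k l, Submodule.coe_inner, PiLp.inner_apply]
  exact Finset.sum_congr rfl fun i _ => mul_comm _ _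

lemma rank_le_finrank_range_inf_ker_add_card [DecidableEq ι] [DecidableEq κ] (A : Matrix ι κ ℝ)
    (B : Matrix τ ι ℝ) :
    A.rank ≤ Module.finrank ℝ
      ↥(LinearMap.range (toEuclideanLin A) ⊓ LinearMap.ker (toEuclideanLin B)) +
        Fintype.card τ := by
  have rank_A : A.rank = Module.finrank ℝ (LinearMap.range (toEuclideanLin A)) := by
    rw [toEuclideanLin, toLpLin_eq_toLin]
    exact rank_eq_finrank_range_toLin A _ _
  have rank_nullity := LinearMap.finrank_range_add_finrank_ker (toEuclideanLin B)
  have range_B := Submodule.finrank_le (LinearMap.range (toEuclideanLin B))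
  have dim_inf := Submodule.finrank_sup_add_finrank_inf_eq
    (LinearMap.range (toEuclideanLin A)) (LinearMap.ker (toEuclideanLin B))
  have dim_sup := Submodule.finrank_le
    (LinearMap.range (toEuclideanLin A) ⊔ LinearMap.ker (toEuclideanLin B))
  rw [finrank_euclideanSpace] at range_B
  omega

lemma exists_orthonormal_columns_range_ker (A : Matrix ι κ ℝ) (B : Matrix τ ι ℝ) :
    ∃ (d : ℕ) (U : Matrix ι (Fin d) ℝ) (V : Matrix κ (Fin d) ℝ),
      Uᵀ * U = 1 ∧ U = A * V ∧ B * U = 0 ∧ A.rank ≤ d + Fintype.card τ := by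
  classical
  obtain ⟨U, hU, range_ker⟩ := exists_orthonormal_columns_mem
    (LinearMap.range (toEuclideanLin A) ⊓ LinearMap.ker (toEuclideanLin B))
  choose v hv using fun k => (range_ker k).1
  refine ⟨_, U, of fun j k => v k j, hU, ?_, ?_, rank_le_finrank_range_inf_ker_add_card A B⟩
  · ext i k
    exact (congrArg (fun x : EuclideanSpace ℝ ι => x i) (hv k)).symm
  · ext t k
    exact congrArg (fun x : EuclideanSpace ℝ τ => x t) (LinearMap.mem_ker.1 (range_ker k).2)

end PosSemidef

section Laplacian

variable {ι κ τ : Type*} [Fintype ι] [Fintype κ] [Fintype τ]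

/-- `L` is the Laplacian of a graph on `ι` with nonnegative edge weights `-L i j`. -/
structure IsLaplacian (L : Matrix ι ι ℝ) : Prop where
  isSymm : L.IsSymm
  row_sum : ∀ i, ∑ j, L i j = 0
  off_diag_nonpos : ∀ ⦃i j⦄, i ≠ j → L i j ≤ 0

lemma isLaplacian_lapMatrix [DecidableEq ι] (G : SimpleGraph ι) [DecidableRel G.Adj] :
    IsLaplacian (G.lapMatrix ℝ) where
  isSymm := G.isSymm_lapMatrix ℝ
  row_sum i := by
    simpa [mulVec, dotProduct] using congrFun (G.lapMatrix_mulVec_const_eq_zero (R := ℝ)) i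
  off_diag_nonpos i j hij := by
    rw [SimpleGraph.lapMatrix, SimpleGraph.degMatrix, Matrix.sub_apply, diagonal_apply_ne _ hij,
      SimpleGraph.adjMatrix_apply]
    split_ifs <;> norm_num

namespace IsLaplacian

variable {L : Matrix ι ι ℝ}

lemma col_sum (hL : IsLaplacian L) (j : ι) : ∑ i, L i j = 0 :=
  (Finset.sum_congr rfl fun i _ => hL.isSymm.apply j i).trans (hL.row_sum j)

lemma sum_mul_nonpos (hL : IsLaplacian L) {f : ι → ι → ℝ} (hf : ∀ i j, 0 ≤ f i j)
    (hdiag : ∀ i, f i i = 0) :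
    ∑ i, ∑ j, L i j * f i j ≤ 0 := by
  refine Finset.sum_nonpos fun i _ => Finset.sum_nonpos fun j _ => ?_
  rcases eq_or_ne i j with rfl | hij
  · rw [hdiag, mul_zero]
  · exact mul_nonpos_of_nonpos_of_nonneg (hL.off_diag_nonpos hij) (hf i j)

lemma sum_mul_sq_le (hL : IsLaplacian L) {f : ι → ι → ℝ} {s : ℝ} (hdiag : ∀ i, f i i = s) :
    ∑ i, ∑ j, L i j * f i j ^ 2 ≤ 2 * s * ∑ i, ∑ j, L i j * f i j := by
  have h := hL.sum_mul_nonpos (f := fun i j => (s - f i j) ^ 2) (fun _ _ => sq_nonneg _)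
    fun i => by rw [hdiag, sub_self, zero_pow two_ne_zero]
  have expand (i j : ι) :
      L i j * (s - f i j) ^ 2 = L i j * s ^ 2 - 2 * s * (L i j * f i j) + L i j * f i j ^ 2 := by
    ring
  simp only [expand, Finset.sum_add_distrib, Finset.sum_sub_distrib, ← Finset.mul_sum,
    ← Finset.sum_mul, hL.row_sum] at h
  linarith

lemma two_mul_dotProduct_mulVec (hL : IsLaplacian L) (x : ι → ℝ) :
    2 * (x ⬝ᵥ L *ᵥ x) = ∑ i, ∑ j, -L i j * (x i - x j) ^ 2 := by
  have expand (i j : ι) : -L i j * (x i - x j) ^ 2 =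
      2 * (x i * (L i j * x j)) - L i j * x i ^ 2 - L i j * x j ^ 2 := by
    ring
  have rows : ∑ i, ∑ j, L i j * x i ^ 2 = 0 := by simp [← Finset.sum_mul, hL.row_sum]
  have cols : ∑ i, ∑ j, L i j * x j ^ 2 = 0 := by
    rw [Finset.sum_comm]
    simp [← Finset.sum_mul, hL.col_sum]
  simp only [expand, Finset.sum_sub_distrib, rows, cols, sub_zero, ← Finset.mul_sum, dotProduct,
    mulVec]

lemma posSemidef (hL : IsLaplacian L) : L.PosSemidef := by
  refine .of_dotProduct_mulVec_nonneg ?_ fun x => ?_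
  · rw [IsHermitian, conjTranspose_eq_transpose_of_trivial, hL.isSymm]
  · have h := hL.sum_mul_nonpos (f := fun i j => (x i - x j) ^ 2) (fun _ _ => sq_nonneg _)
      fun i => by rw [sub_self, zero_pow two_ne_zero]
    have h' := hL.two_mul_dotProduct_mulVec x
    simp only [neg_mul, Finset.sum_neg_distrib] at h'
    rw [star_trivial]
    linarith

end IsLaplacian

/-- The quadratic form of `L` dominates `lam` times the squared norm on the vectors with zero sum;
for a graph Laplacian this says that `lam` is at most the second-smallest eigenvalue. -/
def HasSpectralGap (L : Matrix ι ι ℝ) (lam : ℝ) : Prop :=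
  ∀ x : ι → ℝ, ∑ i, x i = 0 → lam * ∑ i, x i ^ 2 ≤ x ⬝ᵥ L *ᵥ x

lemma sum_sum_sub_sq_of_sum_eq_zero {x : ι → ℝ} (hx : ∑ i, x i = 0) :
    ∑ i, ∑ j, (x i - x j) ^ 2 = 2 * Fintype.card ι * ∑ i, x i ^ 2 := by
  simp only [sub_sq, Finset.sum_add_distrib, Finset.sum_sub_distrib, ← Finset.mul_sum, hx,
    mul_zero, Finset.sum_const_zero, Finset.sum_const, Finset.card_univ, nsmul_eq_mul]
  ring

lemma HasSpectralGap.poincare {L : Matrix ι ι ℝ} {lam : ℝ} (hlam : HasSpectralGap L lam)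
    (hL : IsLaplacian L) (x : ι → ℝ) :
    lam * ∑ i, ∑ j, (x i - x j) ^ 2 ≤ 2 * Fintype.card ι * (x ⬝ᵥ L *ᵥ x) := by
  rcases isEmpty_or_nonempty ι with _ | _
  · simp
  let y : ι → ℝ := fun i => x i - (∑ j, x j) / Fintype.card ι
  have sum_y : ∑ i, y i = 0 := by
    simp only [y, Finset.sum_sub_distrib, Finset.sum_const, Finset.card_univ, nsmul_eq_mul]
    field_simp
    ring
  have y_sub (i j : ι) : y i - y j = x i - x j := sub_sub_sub_cancel_right _ _ _
  have form_y : y ⬝ᵥ L *ᵥ y = x ⬝ᵥ L *ᵥ x := by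
    have hy := hL.two_mul_dotProduct_mulVec y
    simp only [y_sub] at hy
    linarith [hL.two_mul_dotProduct_mulVec x]
  have h := mul_le_mul_of_nonneg_left (hlam y sum_y)
    (by positivity : (0 : ℝ) ≤ 2 * Fintype.card ι)
  simp only [← y_sub, sum_sum_sub_sq_of_sum_eq_zero sum_y]
  rw [← form_y]
  linarith

section Kronecker

variable [DecidableEq κ]

lemma trace_kronecker_one_mul (L : Matrix ι ι ℝ) (X : Matrix (ι × κ) (ι × κ) ℝ) :
    ((L ⊗ₖ (1 : Matrix κ κ ℝ)) * X).trace = ∑ i, ∑ j, L i j * ∑ a, X (j, a) (i, a) := by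
  simp only [trace, diag_apply, mul_apply, kroneckerMap_apply, Fintype.sum_prod_type, one_apply,
    mul_ite, mul_one, mul_zero, ite_mul, zero_mul, Finset.sum_ite_eq, Finset.mem_univ, if_true,
    Finset.mul_sum]
  exact Finset.sum_congr rfl fun i _ => Finset.sum_comm

lemma trace_kronecker_one_mul_gram (L : Matrix ι ι ℝ) (W : Matrix (ι × κ) τ ℝ) :
    ((L ⊗ₖ (1 : Matrix κ κ ℝ)) * (W * Wᵀ)).trace =
      ∑ a, ∑ c, (fun i => W (i, a) c) ⬝ᵥ L *ᵥ (fun i => W (i, a) c) := by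
  simp only [trace_kronecker_one_mul, mul_apply, transpose_apply, dotProduct, mulVec,
    Finset.mul_sum]
  simp only [Finset.sum_comm (s := (Finset.univ : Finset ι)) (t := (Finset.univ : Finset κ)),
    Finset.sum_comm (s := (Finset.univ : Finset ι)) (t := (Finset.univ : Finset τ))]
  refine Finset.sum_congr rfl fun a _ => Finset.sum_congr rfl fun c _ =>
    Finset.sum_congr rfl fun i _ => Finset.sum_congr rfl fun j _ => ?_
  ring

lemma IsLaplacian.trace_kronecker_one_mul_gram_nonneg {L : Matrix ι ι ℝ} (hL : IsLaplacian L)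
    (W : Matrix (ι × κ) τ ℝ) : 0 ≤ ((L ⊗ₖ (1 : Matrix κ κ ℝ)) * (W * Wᵀ)).trace :=
  trace_mul_nonneg_of_posSemidef (hL.posSemidef.kronecker .one) (posSemidef_mul_transpose W)

lemma HasSpectralGap.mul_frobSq_le_trace {L : Matrix ι ι ℝ} {lam : ℝ}
    (hlam : HasSpectralGap L lam) {W : Matrix (ι × κ) τ ℝ} (hW : ∀ a c, ∑ i, W (i, a) c = 0) :
    lam * frobSq W ≤ ((L ⊗ₖ (1 : Matrix κ κ ℝ)) * (W * Wᵀ)).trace := by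
  have slices : frobSq W = ∑ a, ∑ c, ∑ i, W (i, a) c ^ 2 := by
    rw [frobSq, Fintype.sum_prod_type_right]
    exact Finset.sum_congr rfl fun a _ => Finset.sum_comm
  rw [trace_kronecker_one_mul_gram, slices]
  rw [Finset.mul_sum]
  refine Finset.sum_le_sum fun a _ => ?_
  rw [Finset.mul_sum]
  exact Finset.sum_le_sum fun c _ => hlam _ (hW a c)

/-- The block matrix all of whose row-blocks are the `k`-th row-block of `W`. -/
def repeatBlock (W : Matrix (ι × κ) τ ℝ) (k : ι) : Matrix (ι × κ) τ ℝ :=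
  W.submatrix (fun q => (k, q.2)) id

lemma HasSpectralGap.mul_sum_frobSq_sub_repeatBlock_le {L : Matrix ι ι ℝ} {lam : ℝ}
    (hlam : HasSpectralGap L lam) (hL : IsLaplacian L) (W : Matrix (ι × κ) τ ℝ) :
    lam * ∑ k, frobSq (W - repeatBlock W k) ≤
      2 * Fintype.card ι * ((L ⊗ₖ (1 : Matrix κ κ ℝ)) * (W * Wᵀ)).trace := by
  have slices : ∑ k, frobSq (W - repeatBlock W k) =
      ∑ a, ∑ c, ∑ i, ∑ j, (W (i, a) c - W (j, a) c) ^ 2 := by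
    simp only [frobSq, Matrix.sub_apply, repeatBlock, submatrix_apply, id,
      Fintype.sum_prod_type_right, Finset.sum_comm (s := (Finset.univ : Finset ι))
        (t := (Finset.univ : Finset κ)), Finset.sum_comm (s := (Finset.univ : Finset ι))
        (t := (Finset.univ : Finset τ))]
    exact Finset.sum_congr rfl fun a _ => Finset.sum_congr rfl fun c _ => Finset.sum_comm
  rw [trace_kronecker_one_mul_gram, slices, Finset.mul_sum, Finset.mul_sum]
  refine Finset.sum_le_sum fun a _ => ?_
  rw [Finset.mul_sum, Finset.mul_sum]
  exact Finset.sum_le_sum fun c _ => hlam.poincare hL _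

end Kronecker

end Laplacian

section SecondEigenvalue

variable {n : ℕ} {L : Matrix (Fin n) (Fin n) ℝ}

/-- The unit vectors orthogonal to the all-ones vector, over which `lam2` is a minimum. -/
def balancedSphere (n : ℕ) : Set (Fin n → ℝ) :=
  {x | ∑ i, x i = 0 ∧ ∑ i, x i ^ 2 = 1}

lemma lam2_eq_sInf_image (L : Matrix (Fin n) (Fin n) ℝ) :
    lam2 L = sInf ((fun x => x ⬝ᵥ L *ᵥ x) '' balancedSphere n) := by
  simp only [lam2, balancedSphere, Set.image, Set.mem_ofPred_eq, and_assoc, eq_comm]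

lemma isCompact_balancedSphere (n : ℕ) : IsCompact (balancedSphere n) := by
  refine (isCompact_univ_pi fun _ => isCompact_Icc (a := (-1 : ℝ)) (b := 1)).of_isClosed_subset
    ((isClosed_eq (by fun_prop) continuous_const).inter
      (isClosed_eq (by fun_prop) continuous_const)) ?_
  rintro x ⟨-, hx⟩ i -
  refine abs_le.1 ((sq_le_one_iff_abs_le_one _).1 (hx ▸ ?_))
  exact Finset.single_le_sum (f := fun i => x i ^ 2) (fun _ _ => sq_nonneg _) (Finset.mem_univ i)

lemma inv_sqrt_smul_mem_balancedSphere {x : Fin n → ℝ} (hx : ∑ i, x i = 0)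
    (hpos : 0 < ∑ i, x i ^ 2) : (√(∑ i, x i ^ 2))⁻¹ • x ∈ balancedSphere n := by
  refine ⟨by simp [← Finset.mul_sum, hx], ?_⟩
  simp only [Pi.smul_apply, smul_eq_mul, mul_pow, ← Finset.mul_sum, inv_pow, Real.sq_sqrt hpos.le]
  exact inv_mul_cancel₀ hpos.ne'

lemma balancedSphere_nonempty (hn : 1 < n) : (balancedSphere n).Nonempty := by
  let i₀ : Fin n := ⟨0, by omega⟩
  let i₁ : Fin n := ⟨1, hn⟩
  have hne : i₀ ≠ i₁ := by simp [i₀, i₁]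
  refine ⟨_, inv_sqrt_smul_mem_balancedSphere (x := Pi.single i₀ 1 - Pi.single i₁ 1) ?_ ?_⟩
  · simp
  · exact Finset.sum_pos' (fun _ _ => sq_nonneg _) ⟨i₀, Finset.mem_univ _, by simp [hne]⟩

lemma hasSpectralGap_lam2 (hL : L.PosSemidef) : HasSpectralGap L (lam2 L) := by
  have form_nonneg (x : Fin n → ℝ) : 0 ≤ x ⬝ᵥ L *ᵥ x := by
    simpa using hL.dotProduct_mulVec_nonneg x
  intro x hx
  rcases (Finset.sum_nonneg fun i _ => sq_nonneg (x i)).eq_or_lt with h0 | hpos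
  · rw [← h0, mul_zero]
    exact form_nonneg x
  have h : lam2 L ≤ (√(∑ i, x i ^ 2))⁻¹ • x ⬝ᵥ L *ᵥ ((√(∑ i, x i ^ 2))⁻¹ • x) := by
    rw [lam2_eq_sInf_image]
    refine csInf_le ⟨0, ?_⟩ ⟨_, inv_sqrt_smul_mem_balancedSphere hx hpos, rfl⟩
    rintro _ ⟨y, -, rfl⟩
    exact form_nonneg y
  rw [mulVec_smul, smul_dotProduct, dotProduct_smul, smul_eq_mul, smul_eq_mul, ← mul_assoc,
    ← mul_inv, Real.mul_self_sqrt hpos.le, inv_mul_eq_div] at h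
  exact (le_div_iff₀ hpos).1 h

lemma lam2_pos (hn : 1 < n) (hL : L.PosSemidef)
    (hker : ∀ x : Fin n → ℝ, L *ᵥ x = 0 → ∀ i j, x i = x j) : 0 < lam2 L := by
  have hcont : Continuous fun x : Fin n → ℝ => x ⬝ᵥ L *ᵥ x := by fun_prop
  obtain ⟨x, ⟨hsum, hsq⟩, hx⟩ :=
    ((isCompact_balancedSphere n).image hcont).sInf_mem ((balancedSphere_nonempty hn).image _)
  rw [lam2_eq_sInf_image, ← hx]
  refine lt_of_le_of_ne (by simpa using hL.dotProduct_mulVec_nonneg x) fun h0 => ?_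
  have const := hker x ((hL.dotProduct_mulVec_zero_iff x).1 (by simpa using h0.symm))
  have x_zero (i : Fin n) : x i = 0 := by
    rw [Finset.sum_congr rfl fun j _ => const j i] at hsum
    simpa [show n ≠ 0 by omega] using hsum
  simp [x_zero] at hsq

end SecondEigenvalue

section Blocks

variable {n r p : ℕ}

/-- The `(i, j)`-th `r × r` block of a block matrix `M ∈ ℝ^{rn × rn}`. -/
def block (M : Matrix (Fin n × Fin r) (Fin n × Fin r) ℝ) (i j : Fin n) :
    Matrix (Fin r) (Fin r) ℝ :=
  M.submatrix (Prod.mk i) (Prod.mk j)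

lemma block_mul_transpose (W Y : Matrix (Fin n × Fin r) (Fin p) ℝ) (i j : Fin n) :
    block (W * Yᵀ) i j = blk W i * (blk Y j)ᵀ := rfl

lemma blk_Dmat_mul (Z : Fin n → Matrix (Fin r) (Fin r) ℝ)
    (W : Matrix (Fin n × Fin r) (Fin p) ℝ) (i : Fin n) :
    blk (Dmat Z * W) i = Z i * blk W i := by
  ext a c
  simp [blk, Dmat, mul_apply, Fintype.sum_prod_type]

lemma Dmat_transpose (Z : Fin n → Matrix (Fin r) (Fin r) ℝ) :
    (Dmat Z)ᵀ = Dmat fun i => (Z i)ᵀ := by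
  ext ⟨i, a⟩ ⟨j, b⟩
  rcases eq_or_ne i j with rfl | hij
  · simp [Dmat]
  · simp [Dmat, hij, hij.symm]

lemma Dmat_mul_Dmat (Z W : Fin n → Matrix (Fin r) (Fin r) ℝ) :
    Dmat Z * Dmat W = Dmat fun i => Z i * W i := by
  ext ⟨i, a⟩ ⟨j, b⟩
  rcases eq_or_ne i j with rfl | hij
  · simp [Dmat, mul_apply, Fintype.sum_prod_type]
  · simp [Dmat, mul_apply, Fintype.sum_prod_type, hij]

lemma Dmat_one : Dmat (fun _ => 1) = (1 : Matrix (Fin n × Fin r) (Fin n × Fin r) ℝ) := by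
  ext ⟨i, a⟩ ⟨j, b⟩
  simp [Dmat, one_apply, ← ite_and]

lemma Dmat_mul_transpose_self {Z : Fin n → Matrix (Fin r) (Fin r) ℝ}
    (hZ : ∀ i, Z i * (Z i)ᵀ = 1) : Dmat Z * (Dmat Z)ᵀ = 1 := by
  rw [Dmat_transpose, Dmat_mul_Dmat, funext hZ, Dmat_one]

lemma block_Dmat_mul_mul_Dmat (Z W : Fin n → Matrix (Fin r) (Fin r) ℝ)
    (M : Matrix (Fin n × Fin r) (Fin n × Fin r) ℝ) (i j : Fin n) :
    block (Dmat Z * M * Dmat W) i j = Z i * block M i j * W j := by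
  ext a b
  simp [block, Dmat, mul_apply, Fintype.sum_prod_type, Finset.sum_ite_irrel]

lemma trace_Dmat_mul (Z : Fin n → Matrix (Fin r) (Fin r) ℝ)
    (X : Matrix (Fin n × Fin r) (Fin n × Fin r) ℝ) :
    (Dmat Z * X).trace = ∑ i, (Z i * block X i i).trace := by
  simp [trace, Dmat, block, mul_apply, Fintype.sum_prod_type]

lemma frobSq_Dmat (Z : Fin n → Matrix (Fin r) (Fin r) ℝ) :
    frobSq (Dmat Z) = ∑ i, frobSq (Z i) := by
  simp [frobSq, Dmat, Fintype.sum_prod_type, ite_pow, Finset.sum_ite_irrel]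

open scoped MatrixOrder ComplexOrder in
lemma posSemidef_Dmat {Z : Fin n → Matrix (Fin r) (Fin r) ℝ} (hZ : ∀ i, (Z i).PosSemidef) :
    (Dmat Z).PosSemidef := by
  choose B hB using fun i => CStarAlgebra.nonneg_iff_eq_star_mul_self.mp (hZ i).nonneg
  have factor : Dmat Z = Dmat (fun i => (B i)ᵀ) * (Dmat fun i => (B i)ᵀ)ᵀ := by
    rw [Dmat_transpose, Dmat_mul_Dmat]
    exact congrArg Dmat (funext fun i => by
      rw [hB, star_eq_conjTranspose, conjTranspose_eq_transpose_of_trivial, transpose_transpose])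
  exact factor ▸ posSemidef_mul_transpose _

lemma SBD_eq_Dmat (M : Matrix (Fin n × Fin r) (Fin n × Fin r) ℝ) :
    SBD M = Dmat fun i => (1 / 2 : ℝ) • (block M i i + (block M i i)ᵀ) := by
  ext ⟨i, a⟩ ⟨j, b⟩
  rcases eq_or_ne i j with rfl | hij
  · simp [SBD, Dmat, block, inv_mul_eq_div]
  · simp [SBD, Dmat, hij]

lemma SBD_sub (M N : Matrix (Fin n × Fin r) (Fin n × Fin r) ℝ) :
    SBD (M - N) = SBD M - SBD N := by
  ext q q'
  simp only [SBD, of_apply, Matrix.sub_apply]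
  split_ifs <;> ring

lemma SBD_transpose (M : Matrix (Fin n × Fin r) (Fin n × Fin r) ℝ) : (SBD M)ᵀ = SBD M := by
  simp only [SBD_eq_Dmat, Dmat_transpose, transpose_smul, transpose_add, transpose_transpose,
    add_comm]

lemma SBD_Dmat_conj (Z : Fin n → Matrix (Fin r) (Fin r) ℝ)
    (M : Matrix (Fin n × Fin r) (Fin n × Fin r) ℝ) :
    SBD ((Dmat Z)ᵀ * M * Dmat Z) = (Dmat Z)ᵀ * SBD M * Dmat Z := by
  simp only [SBD_eq_Dmat, Dmat_transpose, block_Dmat_mul_mul_Dmat, Dmat_mul_Dmat]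
  simp only [transpose_mul, transpose_transpose, Matrix.mul_smul, Matrix.smul_mul,
    Matrix.mul_add, Matrix.add_mul, Matrix.mul_assoc]

lemma trace_SBD_mul (M : Matrix (Fin n × Fin r) (Fin n × Fin r) ℝ)
    {X : Matrix (Fin n × Fin r) (Fin n × Fin r) ℝ} {c : ℝ} (hX : ∀ i, block X i i = c • 1) :
    (SBD M * X).trace = c * M.trace := by
  simp only [SBD_eq_Dmat, trace_Dmat_mul, hX, Matrix.mul_smul, Matrix.mul_one, trace_smul,
    trace_add, trace_transpose, smul_eq_mul, ← Finset.mul_sum, ← two_mul]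
  rw [← mul_assoc (1 / 2), one_div, inv_mul_cancel₀ two_ne_zero, one_mul]
  simp [trace, Fintype.sum_prod_type, block]

lemma trace_SBD (M : Matrix (Fin n × Fin r) (Fin n × Fin r) ℝ) : (SBD M).trace = M.trace := by
  have h := trace_SBD_mul M (X := 1) (c := 1) fun i => by
    ext a b
    simp [block, one_apply]
  rwa [Matrix.mul_one, one_mul] at h

lemma block_self_eq_one_of_SBD_eq_one {X : Matrix (Fin n × Fin r) (Fin n × Fin r) ℝ}
    (hsymm : X.IsSymm) (hX : SBD X = 1) (i : Fin n) : block X i i = 1 := by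
  ext a b
  have h := congrFun (congrFun hX (i, a)) (i, b)
  simp only [SBD, of_apply, if_true, hsymm.apply (i, a) (i, b)] at h
  simpa [block, one_apply] using h

lemma frobSq_mul_transpose_le {ι κ τ : Type*} [Fintype ι] [Fintype κ] [Fintype τ]
    [DecidableEq τ] (B : Matrix ι κ ℝ) {C : Matrix τ κ ℝ} (hC : C * Cᵀ = 1) :
    frobSq (B * Cᵀ) ≤ frobSq B := by
  have h := trace_mul_gram_le_trace (by simpa using posSemidef_mul_transpose Bᵀ)
    (U := Cᵀ) (by rwa [transpose_transpose])
  rw [frobSq_eq_trace, frobSq_eq_trace, trace_mul_comm B]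
  refine le_of_eq_of_le ?_ h
  rw [transpose_mul, transpose_transpose, ← Matrix.mul_assoc, trace_mul_comm]
  simp only [Matrix.mul_assoc]

lemma frobSq_eq_sum_frobSq_blk (W : Matrix (Fin n × Fin r) (Fin p) ℝ) :
    frobSq W = ∑ i, frobSq (blk W i) := by
  simp [frobSq, blk, Fintype.sum_prod_type]

lemma frobSq_symmetrize_le (B : Matrix (Fin r) (Fin r) ℝ) :
    frobSq ((1 / 2 : ℝ) • (B + Bᵀ)) ≤ frobSq B := by
  have h := frobSq_add_le B Bᵀ
  have transpose_eq : frobSq Bᵀ = frobSq B := Finset.sum_comm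
  have smul_eq (A : Matrix (Fin r) (Fin r) ℝ) : frobSq ((1 / 2 : ℝ) • A) = frobSq A / 4 := by
    simp only [frobSq, Finset.sum_div, Matrix.smul_apply, smul_eq_mul]
    ring_nf
  rw [smul_eq]
  linarith

lemma feasible_repeatBlock {Y : Matrix (Fin n × Fin r) (Fin p) ℝ} (hY : Feasible Y) (k : Fin n) :
    Feasible (repeatBlock Y k) :=
  fun _ => hY k

namespace Feasible

variable {Y : Matrix (Fin n × Fin r) (Fin p) ℝ}

lemma frobSq_eq (hY : Feasible Y) : frobSq Y = r * n := by
  rw [frobSq_eq_sum_frobSq_blk]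
  simp only [frobSq_eq_trace, hY _, trace_one, Fintype.card_fin, Finset.sum_const,
    Finset.card_univ, nsmul_eq_mul, mul_comm]

lemma frobSq_SBD_mul_transpose_le (hY : Feasible Y) (W : Matrix (Fin n × Fin r) (Fin p) ℝ) :
    frobSq (SBD (W * Yᵀ)) ≤ frobSq W := by
  simp only [SBD_eq_Dmat, frobSq_Dmat, frobSq_eq_sum_frobSq_blk W, block_mul_transpose]
  refine Finset.sum_le_sum fun i _ => (frobSq_symmetrize_le _).trans ?_
  exact frobSq_mul_transpose_le _ (hY i)

lemma sdpFeasible (hY : Feasible Y) : SDPFeasible (Y * Yᵀ) := by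
  refine ⟨posSemidef_mul_transpose Y, ?_⟩
  simp only [SBD_eq_Dmat, block_mul_transpose, hY _, transpose_one, ← two_smul ℝ, smul_smul]
  norm_num [Dmat_one]

end Feasible

lemma blk_kronecker_one_mul (L : Matrix (Fin n) (Fin n) ℝ) (Y : Matrix (Fin n × Fin r) (Fin p) ℝ)
    (i : Fin n) :
    blk ((L ⊗ₖ (1 : Matrix (Fin r) (Fin r) ℝ)) * Y) i = ∑ j, L i j • blk Y j := by
  ext a c
  simp [blk, mul_apply, Fintype.sum_prod_type, one_apply, Matrix.sum_apply]

lemma IsLaplacian.posSemidef_SBD_kronecker_one_mul_gram {L : Matrix (Fin n) (Fin n) ℝ}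
    (hL : IsLaplacian L) {Y : Matrix (Fin n × Fin r) (Fin p) ℝ} (hY : Feasible Y) :
    (SBD ((L ⊗ₖ (1 : Matrix (Fin r) (Fin r) ℝ)) * Y * Yᵀ)).PosSemidef := by
  have expand (i j : Fin n) : L i j • (blk Y j * (blk Y i)ᵀ + blk Y i * (blk Y j)ᵀ) =
      (L i j * 2) • (1 : Matrix (Fin r) (Fin r) ℝ) +
        (-L i j) • ((blk Y i - blk Y j) * (blk Y i - blk Y j)ᵀ) := by
    simp only [transpose_sub, Matrix.sub_mul, Matrix.mul_sub, hY _]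
    module
  have diagonal_block (i : Fin n) :
      block ((L ⊗ₖ (1 : Matrix (Fin r) (Fin r) ℝ)) * Y * Yᵀ) i i +
          (block ((L ⊗ₖ (1 : Matrix (Fin r) (Fin r) ℝ)) * Y * Yᵀ) i i)ᵀ =
        ∑ j, (-L i j) • ((blk Y i - blk Y j) * (blk Y i - blk Y j)ᵀ) := by
    simp only [block_mul_transpose, blk_kronecker_one_mul, Matrix.sum_mul, transpose_sum,
      Matrix.smul_mul, transpose_smul, transpose_mul, transpose_transpose,
      ← Finset.sum_add_distrib, ← smul_add, expand]
    rw [Finset.sum_add_distrib, ← Finset.sum_smul, ← Finset.sum_mul, hL.row_sum, zero_mul,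
      zero_smul, zero_add]
  rw [SBD_eq_Dmat]
  refine posSemidef_Dmat fun i => .smul ?_ (by norm_num)
  rw [diagonal_block]
  refine posSemidef_sum _ fun j _ => ?_
  rcases eq_or_ne i j with rfl | hij
  · simpa using PosSemidef.zero
  · exact (posSemidef_mul_transpose _).smul (neg_nonneg.2 (hL.off_diag_nonpos hij))

end Blocks

section SingleSums

variable {ι κ : Type*} [Fintype ι] [Fintype κ] [DecidableEq ι] [DecidableEq κ]

lemma sum_single_mul_mul_transpose_single (M : Matrix κ κ ℝ) :
    ∑ a : ι, ∑ b : κ, single a b (1 : ℝ) * M * (single a b (1 : ℝ))ᵀ = M.trace • 1 := by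
  ext i j
  rcases eq_or_ne i j with rfl | hij
  · simp [transpose_single, Matrix.sum_apply, single_apply, trace]
  · simp [transpose_single, Matrix.sum_apply, single_apply, hij, ite_and]

lemma sum_single_mul_mul_single (M : Matrix κ ι ℝ) :
    ∑ a : ι, ∑ b : κ, single a b (1 : ℝ) * M * single a b (1 : ℝ) = Mᵀ := by
  simp only [single_mul_mul_single, one_mul, mul_one]
  exact (matrix_eq_sum_single Mᵀ).symm

end SingleSums

section SecondOrder

variable {n r p : ℕ} {Y : Matrix (Fin n × Fin r) (Fin p) ℝ}

/-- The direction with blocks `G - Yᵢ Gᵀ Yᵢ`: the tangent direction at `Y` induced by perturbing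
every block of `Y` by the same matrix `G`. -/
def commonTangent (Y : Matrix (Fin n × Fin r) (Fin p) ℝ) (G : Matrix (Fin r) (Fin p) ℝ) :
    Matrix (Fin n × Fin r) (Fin p) ℝ :=
  of fun q c => (G - blk Y q.1 * Gᵀ * blk Y q.1) q.2 c

lemma blk_commonTangent (Y : Matrix (Fin n × Fin r) (Fin p) ℝ) (G : Matrix (Fin r) (Fin p) ℝ)
    (i : Fin n) : blk (commonTangent Y G) i = G - blk Y i * Gᵀ * blk Y i := rfl

/-- The sum of the Gram matrices of the `commonTangent`s over the standard basis of `ℝ^{r × p}`;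
its `(i, j)`-th block is `(p - 2) I + tr(Yᵢ Yⱼᵀ) Yᵢ Yⱼᵀ`. -/
def tangentMoment (Y : Matrix (Fin n × Fin r) (Fin p) ℝ) :
    Matrix (Fin n × Fin r) (Fin n × Fin r) ℝ :=
  ∑ a, ∑ b, commonTangent Y (single a b 1) * (commonTangent Y (single a b 1))ᵀ

namespace Feasible

lemma commonTangent_tangent (hY : Feasible Y) (G : Matrix (Fin r) (Fin p) ℝ) (i : Fin n) :
    blk (commonTangent Y G) i * (blk Y i)ᵀ + blk Y i * (blk (commonTangent Y G) i)ᵀ = 0 := by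
  simp only [blk_commonTangent, transpose_sub, transpose_mul, transpose_transpose, Matrix.sub_mul,
    Matrix.mul_sub, Matrix.mul_assoc, hY i, Matrix.mul_one]
  simp only [← Matrix.mul_assoc, hY i, Matrix.one_mul]
  abel

lemma block_tangentMoment (hY : Feasible Y) (i j : Fin n) :
    block (tangentMoment Y) i j =
      ((p : ℝ) - 2) • 1 + (blk Y i * (blk Y j)ᵀ).trace • (blk Y i * (blk Y j)ᵀ) := by
  have block_sum : block (tangentMoment Y) i j = ∑ a, ∑ b,
      blk (commonTangent Y (single a b 1)) i * (blk (commonTangent Y (single a b 1)) j)ᵀ := by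
    ext x y
    simp [block, tangentMoment, Matrix.sum_apply, mul_apply, blk]
  have expand (E : Matrix (Fin r) (Fin p) ℝ) :
      blk (commonTangent Y E) i * (blk (commonTangent Y E) j)ᵀ =
        E * (1 : Matrix (Fin p) (Fin p) ℝ) * Eᵀ - blk Y i * (E * (blk Y i)ᵀ * E)ᵀ -
          E * (blk Y j)ᵀ * E * (blk Y j)ᵀ +
            blk Y i * (Eᵀ * (blk Y i * (blk Y j)ᵀ) * Eᵀᵀ) * (blk Y j)ᵀ := by
    simp only [blk_commonTangent, transpose_sub, transpose_mul, transpose_transpose,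
      Matrix.sub_mul, Matrix.mul_sub, Matrix.mul_one, Matrix.mul_assoc]
    abel
  have moment : ∑ a : Fin r, ∑ b : Fin p,
      (single a b (1 : ℝ))ᵀ * (blk Y i * (blk Y j)ᵀ) * (single a b (1 : ℝ))ᵀᵀ =
        (blk Y i * (blk Y j)ᵀ).trace • (1 : Matrix (Fin p) (Fin p) ℝ) := by
    simp only [transpose_single]
    rw [Finset.sum_comm]
    simpa only [transpose_single] using
      sum_single_mul_mul_transpose_single (ι := Fin p) (blk Y i * (blk Y j)ᵀ)
  simp only [block_sum, expand, Finset.sum_add_distrib, Finset.sum_sub_distrib, ← Matrix.mul_sum,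
    ← Matrix.sum_mul, ← transpose_sum, sum_single_mul_mul_transpose_single,
    sum_single_mul_mul_single, moment]
  simp only [transpose_transpose, hY _, trace_one, Fintype.card_fin, Matrix.mul_smul,
    Matrix.smul_mul, Matrix.mul_one]
  module

lemma block_tangentMoment_self (hY : Feasible Y) (i : Fin n) :
    block (tangentMoment Y) i i = ((p : ℝ) + r - 2) • 1 := by
  rw [hY.block_tangentMoment, hY i, trace_one, Fintype.card_fin]
  module

lemma trace_kronecker_mul_tangentMoment_le (hY : Feasible Y) {L : Matrix (Fin n) (Fin n) ℝ}
    (hL : IsLaplacian L) :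
    ((L ⊗ₖ (1 : Matrix (Fin r) (Fin r) ℝ)) * tangentMoment Y).trace ≤
      2 * r * ((L ⊗ₖ (1 : Matrix (Fin r) (Fin r) ℝ)) * (Y * Yᵀ)).trace := by
  let t (i j : Fin n) : ℝ := (blk Y j * (blk Y i)ᵀ).trace
  have trace_block (X : Matrix (Fin n × Fin r) (Fin n × Fin r) ℝ) (i j : Fin n) :
      ∑ a, X (j, a) (i, a) = (block X j i).trace := rfl
  have moment (i j : Fin n) : (block (tangentMoment Y) j i).trace = (p - 2) * r + t i j ^ 2 := by
    simp [hY.block_tangentMoment, t, sq]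
  have t_self (i : Fin n) : t i i = r := by simp [t, hY i]
  simp only [trace_kronecker_one_mul, trace_block, moment, block_mul_transpose, mul_add,
    Finset.sum_add_distrib, ← Finset.sum_mul, hL.row_sum, zero_mul, zero_add]
  exact hL.sum_mul_sq_le t_self

end Feasible

namespace IsSecondOrderCritical

lemma mul_trace_le_trace_mul_tangentMoment {M : Matrix (Fin n × Fin r) (Fin n × Fin r) ℝ}
    (hY : IsSecondOrderCritical M Y) :
    ((p : ℝ) + r - 2) * (M * (Y * Yᵀ)).trace ≤ (M * tangentMoment Y).trace := by
  obtain ⟨hfeas, -, hess⟩ := hY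
  have h : 0 ≤ (Smat M Y * tangentMoment Y).trace := by
    simp only [tangentMoment, Matrix.mul_sum, trace_sum, ← Matrix.mul_assoc]
    exact Finset.sum_nonneg fun a _ => Finset.sum_nonneg fun b _ =>
      hess _ (hfeas.commonTangent_tangent _)
  rwa [Smat, Matrix.sub_mul, trace_sub, trace_SBD_mul _ hfeas.block_tangentMoment_self, sub_nonneg,
    Matrix.mul_assoc] at h

lemma mul_trace_kronecker_le {L : Matrix (Fin n) (Fin n) ℝ} (hL : IsLaplacian L)
    {Δ : Matrix (Fin n × Fin r) (Fin n × Fin r) ℝ}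
    (hY : IsSecondOrderCritical (L ⊗ₖ 1 - Δ) Y) :
    ((p : ℝ) - r - 2) * ((L ⊗ₖ (1 : Matrix (Fin r) (Fin r) ℝ)) * (Y * Yᵀ)).trace ≤
      (Δ * (((p : ℝ) + r - 2) • (Y * Yᵀ) - tangentMoment Y)).trace := by
  have h := hY.mul_trace_le_trace_mul_tangentMoment
  have h' := hY.1.trace_kronecker_mul_tangentMoment_le hL
  simp only [Matrix.sub_mul, Matrix.mul_sub, Matrix.mul_smul, trace_sub, trace_smul,
    smul_eq_mul] at h ⊢
  linarith

end IsSecondOrderCritical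

end SecondOrder

section Noise

variable {n r p : ℕ}

/-- The matrix whose `(i, a)`-th row is the tensor product of the `i`-th block of `W` with the
`(i, a)`-th row of `Y`; a factor of the block matrix with blocks `tr(Wᵢ Wⱼᵀ) Yᵢ Yⱼᵀ`. -/
def tensorRows (W Y : Matrix (Fin n × Fin r) (Fin p) ℝ) :
    Matrix (Fin n × Fin r) ((Fin r × Fin p) × Fin p) ℝ :=
  of fun q k => W (q.1, k.1.1) k.1.2 * Y q k.2

lemma tensorRows_add (W W' Y : Matrix (Fin n × Fin r) (Fin p) ℝ) :
    tensorRows (W + W') Y = tensorRows W Y + tensorRows W' Y :=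
  ext fun _ _ => add_mul _ _ _

lemma tensorRows_sub (W W' Y : Matrix (Fin n × Fin r) (Fin p) ℝ) :
    tensorRows (W - W') Y = tensorRows W Y - tensorRows W' Y :=
  ext fun _ _ => sub_mul _ _ _

lemma block_tensorRows_gram (W Y : Matrix (Fin n × Fin r) (Fin p) ℝ) (i j : Fin n) :
    block (tensorRows W Y * (tensorRows W Y)ᵀ) i j =
      (blk W i * (blk W j)ᵀ).trace • (blk Y i * (blk Y j)ᵀ) := by
  ext a b
  simp only [block, tensorRows, blk, submatrix_apply, mul_apply, transpose_apply, of_apply, trace,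
    diag_apply, Matrix.smul_apply, smul_eq_mul, Fintype.sum_prod_type, mul_mul_mul_comm _ (Y _ _),
    ← Finset.sum_mul, ← Finset.mul_sum]

lemma sq_mul_sub_le {u v s x y : ℝ} (hu : 0 ≤ u) (hv : 0 ≤ v) (hx : x ^ 2 ≤ s)
    (hy : y ^ 2 ≤ v ^ 2 * s) : (u * x - y) ^ 2 ≤ (u + v) ^ 2 * s := by
  have hs : 0 ≤ s := (sq_nonneg x).trans hx
  have hx' : |x| ≤ √s := Real.abs_le_sqrt hx
  have hy' : |y| ≤ v * √s := by
    simpa [Real.sqrt_mul (sq_nonneg v), Real.sqrt_sq hv] using Real.abs_le_sqrt hy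
  have h : |u * x - y| ≤ (u + v) * √s := calc
    |u * x - y| ≤ u * |x| + |y| := by
      simpa [abs_mul, abs_of_nonneg hu] using abs_sub (u * x) y
    _ ≤ (u + v) * √s := by linarith [mul_le_mul_of_nonneg_left hx' hu]
  simpa [mul_pow, Real.sq_sqrt hs] using pow_le_pow_left₀ (abs_nonneg _) h 2

namespace Feasible

variable {Y : Matrix (Fin n × Fin r) (Fin p) ℝ}

lemma frobSq_tensorRows (hY : Feasible Y) (W : Matrix (Fin n × Fin r) (Fin p) ℝ) :
    frobSq (tensorRows W Y) = r * frobSq W := by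
  have trace_eq (X : Matrix (Fin n × Fin r) (Fin n × Fin r) ℝ) :
      X.trace = ∑ i, (block X i i).trace := by
    simp [trace, block, Fintype.sum_prod_type]
  simp [frobSq_eq_trace (tensorRows W Y), trace_eq, block_tensorRows_gram, hY _,
    frobSq_eq_sum_frobSq_blk W, frobSq_eq_trace, Finset.mul_sum, mul_comm]

lemma smul_gram_sub_tangentMoment (hY : Feasible Y) (k : Fin n) :
    ((p : ℝ) + r - 2) • (Y * Yᵀ) - tangentMoment Y =
      ((p : ℝ) - 2) • (Y * Yᵀ - repeatBlock Y k * (repeatBlock Y k)ᵀ) -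
        (tensorRows Y Y * (tensorRows Y Y)ᵀ -
          tensorRows (repeatBlock Y k) Y * (tensorRows (repeatBlock Y k) Y)ᵀ) := by
  have blk_repeat (i : Fin n) : blk (repeatBlock Y k) i = blk Y k := rfl
  have blocks (i j : Fin n) :
      ((p : ℝ) + r - 2) • block (Y * Yᵀ) i j - block (tangentMoment Y) i j =
        ((p : ℝ) - 2) • (block (Y * Yᵀ) i j - block (repeatBlock Y k * (repeatBlock Y k)ᵀ) i j) -
          (block (tensorRows Y Y * (tensorRows Y Y)ᵀ) i j -
            block (tensorRows (repeatBlock Y k) Y * (tensorRows (repeatBlock Y k) Y)ᵀ) i j) := by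
    simp only [block_mul_transpose, block_tensorRows_gram, blk_repeat, hY.block_tangentMoment,
      hY k, trace_one, Fintype.card_fin]
    module
  ext ⟨i, a⟩ ⟨j, b⟩
  exact congrFun (congrFun (blocks i j) a) b

lemma sq_trace_mul_smul_gram_sub_tangentMoment_le (hY : Feasible Y) (hp : 2 ≤ p)
    {Δ : Matrix (Fin n × Fin r) (Fin n × Fin r) ℝ} (hΔ : Δᵀ = Δ) (k : Fin n) :
    (Δ * (((p : ℝ) + r - 2) • (Y * Yᵀ) - tangentMoment Y)).trace ^ 2 ≤
      (((p : ℝ) + r - 2) * opNorm Δ) ^ 2 *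
        (4 * (r * n) * frobSq (Y - repeatBlock Y k)) := by
  set F := repeatBlock Y k
  have frobSq_sum_le : frobSq (Y + F) ≤ 4 * (r * n) := by
    have h := frobSq_add_le Y F
    rw [hY.frobSq_eq, (feasible_repeatBlock hY k).frobSq_eq] at h
    linarith
  have scaled : opNorm Δ ^ 2 * frobSq (Y + F) * frobSq (Y - F) ≤
      opNorm Δ ^ 2 * (4 * (r * n) * frobSq (Y - F)) := by
    rw [mul_assoc]
    gcongr
    exact frobSq_nonneg _
  have gram := (sq_trace_mul_gram_sub_gram_le hΔ Y F).trans scaled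
  have tensor : (Δ * (tensorRows Y Y * (tensorRows Y Y)ᵀ -
      tensorRows F Y * (tensorRows F Y)ᵀ)).trace ^ 2 ≤
        (r : ℝ) ^ 2 * (opNorm Δ ^ 2 * (4 * (r * n) * frobSq (Y - F))) := by
    refine (sq_trace_mul_gram_sub_gram_le hΔ _ _).trans ?_
    rw [← tensorRows_add, ← tensorRows_sub, hY.frobSq_tensorRows, hY.frobSq_tensorRows]
    linarith [mul_le_mul_of_nonneg_left scaled (sq_nonneg (r : ℝ))]
  have hp' : (0 : ℝ) ≤ p - 2 := sub_nonneg.2 (mod_cast hp)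
  have h := sq_mul_sub_le hp' r.cast_nonneg gram tensor
  rw [hY.smul_gram_sub_tangentMoment k, Matrix.mul_sub, Matrix.mul_smul, trace_sub, trace_smul,
    smul_eq_mul, mul_pow, mul_assoc]
  convert h using 2
  ring

end Feasible

lemma IsSecondOrderCritical.mul_trace_kronecker_le_noise {L : Matrix (Fin n) (Fin n) ℝ} {lam : ℝ}
    (hL : IsLaplacian L) (hlam : HasSpectralGap L lam) (hlam₀ : 0 ≤ lam) (hp : r + 2 ≤ p)
    {Δ : Matrix (Fin n × Fin r) (Fin n × Fin r) ℝ} (hΔ : Δᵀ = Δ)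
    {Y : Matrix (Fin n × Fin r) (Fin p) ℝ} (hY : IsSecondOrderCritical (L ⊗ₖ 1 - Δ) Y) :
    lam * (((p : ℝ) - r - 2) ^ 2 *
        ((L ⊗ₖ (1 : Matrix (Fin r) (Fin r) ℝ)) * (Y * Yᵀ)).trace) ≤
      8 * (((p : ℝ) + r - 2) * opNorm Δ) ^ 2 * (r * n) := by
  have hess := hY.mul_trace_kronecker_le hL
  have energy_nonneg := hL.trace_kronecker_one_mul_gram_nonneg Y
  have poincare := hlam.mul_sum_frobSq_sub_repeatBlock_le hL Y
  set ℓ := ((L ⊗ₖ (1 : Matrix (Fin r) (Fin r) ℝ)) * (Y * Yᵀ)).trace with hℓ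
  rw [Fintype.card_fin] at poincare
  rcases energy_nonneg.eq_or_lt with energy_zero | energy_pos
  · rw [← energy_zero, mul_zero, mul_zero]
    positivity
  have hn : (0 : ℝ) < n := by
    rcases n.eq_zero_or_pos with rfl | hn
    · exact absurd (by simp [hℓ, trace]) energy_pos.ne'
    · exact mod_cast hn
  have he : (0 : ℝ) ≤ p - r - 2 := by
    have : (r : ℝ) + 2 ≤ p := mod_cast hp
    linarith
  have slice (k : Fin n) : (((p : ℝ) - r - 2) * ℓ) ^ 2 ≤
      (((p : ℝ) + r - 2) * opNorm Δ) ^ 2 * (4 * (r * n) * frobSq (Y - repeatBlock Y k)) :=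
    (pow_le_pow_left₀ (by positivity) hess 2).trans <|
      hY.1.sq_trace_mul_smul_gram_sub_tangentMoment_le (by lia) hΔ k
  have sum_slices : n * (((p : ℝ) - r - 2) * ℓ) ^ 2 ≤ (((p : ℝ) + r - 2) * opNorm Δ) ^ 2 *
      (4 * (r * n) * ∑ k, frobSq (Y - repeatBlock Y k)) := by
    simpa [Finset.mul_sum] using Finset.sum_le_sum fun k (_ : k ∈ Finset.univ) => slice k
  refine le_of_mul_le_mul_left ?_ (mul_pos hn energy_pos)
  calc n * ℓ * (lam * (((p : ℝ) - r - 2) ^ 2 * ℓ))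
      = lam * (n * (((p : ℝ) - r - 2) * ℓ) ^ 2) := by ring
    _ ≤ lam * ((((p : ℝ) + r - 2) * opNorm Δ) ^ 2 *
          (4 * (r * n) * ∑ k, frobSq (Y - repeatBlock Y k))) := by gcongr
    _ = (((p : ℝ) + r - 2) * opNorm Δ) ^ 2 * (4 * (r * n)) *
          (lam * ∑ k, frobSq (Y - repeatBlock Y k)) := by ring
    _ ≤ (((p : ℝ) + r - 2) * opNorm Δ) ^ 2 * (4 * (r * n)) * (2 * n * ℓ) := by gcongr
    _ = n * ℓ * (8 * (((p : ℝ) + r - 2) * opNorm Δ) ^ 2 * (r * n)) := by ring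

end Noise

section Rank

variable {n r p : ℕ} {L : Matrix (Fin n) (Fin n) ℝ} {lam : ℝ}
  {Δ : Matrix (Fin n × Fin r) (Fin n × Fin r) ℝ} {Y : Matrix (Fin n × Fin r) (Fin p) ℝ}

lemma frobSq_eq_card_of_transpose_mul_self {ι κ : Type*} [Fintype ι] [Fintype κ] [DecidableEq κ]
    {U : Matrix ι κ ℝ} (hU : Uᵀ * U = 1) : frobSq U = Fintype.card κ := by
  rw [frobSq_eq_trace, trace_mul_comm, hU, trace_one]

lemma frobSq_gram_of_transpose_mul_self {ι κ : Type*} [Fintype ι] [Fintype κ] [DecidableEq κ]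
    {U : Matrix ι κ ℝ} (hU : Uᵀ * U = 1) : frobSq (U * Uᵀ) = frobSq U := by
  rw [frobSq_eq_trace, transpose_mul, transpose_transpose, Matrix.mul_assoc,
    ← Matrix.mul_assoc Uᵀ, hU, Matrix.one_mul, frobSq_eq_trace]

lemma card_le_card_of_transpose_mul_self {ι κ : Type*} [Fintype ι] [Fintype κ] [DecidableEq κ]
    {U : Matrix ι κ ℝ} (hU : Uᵀ * U = 1) : Fintype.card κ ≤ Fintype.card ι := by
  have h := rank_mul_le_right Uᵀ U
  rw [hU, rank_one] at h
  exact h.trans U.rank_le_card_height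

lemma mul_card_le_of_Smat_mul_eq_zero (hL : IsLaplacian L) (hlam : HasSpectralGap L lam)
    (hY : Feasible Y) (hSY : Smat (L ⊗ₖ 1 - Δ) Y * Y = 0) {d : ℕ}
    {U : Matrix (Fin n × Fin r) (Fin d) ℝ} {V : Matrix (Fin p) (Fin d) ℝ} (hU : Uᵀ * U = 1)
    (hUV : U = Y * V) (hsum : ∀ a c, ∑ i, U (i, a) c = 0) :
    lam * d ≤ opNorm Δ * d + ((L ⊗ₖ (1 : Matrix (Fin r) (Fin r) ℝ)) * (Y * Yᵀ)).trace +
      opNorm Δ * √(r * n * d) := by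
  have frobSq_U : frobSq U = d := by simpa using frobSq_eq_card_of_transpose_mul_self hU
  have frobSq_gram : frobSq (U * Uᵀ) = d := by rw [frobSq_gram_of_transpose_mul_self hU, frobSq_U]
  have stationary : (Smat (L ⊗ₖ 1 - Δ) Y * (U * Uᵀ)).trace = 0 := by
    rw [hUV, Matrix.mul_assoc Y, ← Matrix.mul_assoc, hSY, Matrix.zero_mul, trace_zero]
  simp only [Smat, Matrix.sub_mul, SBD_sub, trace_sub] at stationary
  have gap := hlam.mul_frobSq_le_trace hsum
  rw [frobSq_U] at gap
  have noise : (Δ * (U * Uᵀ)).trace ≤ opNorm Δ * d := by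
    have h := sq_trace_mul_mul_transpose_le Δ U U
    rw [frobSq_U, mul_assoc, ← sq, ← mul_pow, Matrix.mul_assoc] at h
    exact (abs_le_of_sq_le_sq' h (mul_nonneg (opNorm_nonneg Δ) d.cast_nonneg)).2
  have multiplier : (SBD ((L ⊗ₖ (1 : Matrix (Fin r) (Fin r) ℝ)) * Y * Yᵀ) * (U * Uᵀ)).trace ≤
      ((L ⊗ₖ (1 : Matrix (Fin r) (Fin r) ℝ)) * (Y * Yᵀ)).trace := by
    rw [← Matrix.mul_assoc _ Y, ← trace_SBD (_ * Y * Yᵀ)]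
    exact trace_mul_gram_le_trace (hL.posSemidef_SBD_kronecker_one_mul_gram hY) hU
  have noise_multiplier : -(SBD (Δ * Y * Yᵀ) * (U * Uᵀ)).trace ≤ opNorm Δ * √(r * n * d) := by
    have h := sq_trace_mul_transpose_le (SBD (Δ * Y * Yᵀ)) (U * Uᵀ)
    rw [transpose_mul, transpose_transpose, frobSq_gram] at h
    have frobSq_le : frobSq (SBD (Δ * Y * Yᵀ)) ≤ opNorm Δ ^ 2 * (r * n) := by
      simpa only [hY.frobSq_eq] using
        (hY.frobSq_SBD_mul_transpose_le (Δ * Y)).trans (frobSq_mul_le Δ Y)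
    have h' := Real.abs_le_sqrt (h.trans (mul_le_mul_of_nonneg_right frobSq_le d.cast_nonneg))
    rw [mul_assoc, Real.sqrt_mul (sq_nonneg _), Real.sqrt_sq (opNorm_nonneg Δ)] at h'
    exact (neg_le_abs _).trans h'
  linarith

lemma le_of_mul_le_add_add_sqrt {d m N C ℓ lam : ℝ} (hlam : 0 < lam) (hd : 0 ≤ d)
    (hdm : d ≤ m) (hC : 2 ≤ C) (hℓ : lam * ℓ ≤ 2 * (C * N) ^ 2 * m)
    (h : lam * d ≤ N * d + ℓ + N * √(m * d)) : d ≤ 5 * C ^ 2 * (N / lam) ^ 2 * m := by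
  by_contra! hlt
  have hm : 0 ≤ m := hd.trans hdm
  have hCN : 5 * (C * N) ^ 2 * m < lam ^ 2 * d := by
    have h' := mul_lt_mul_of_pos_left hlt (pow_pos hlam 2)
    refine lt_of_eq_of_lt ?_ h'
    field_simp
  have hNm : 20 * (N ^ 2 * m) < lam ^ 2 * d := by
    have hC4 : 4 ≤ C ^ 2 := by nlinarith
    nlinarith [mul_le_mul_of_nonneg_right hC4 (mul_nonneg (sq_nonneg N) hm)]
  have hd_pos : 0 < d := pos_of_mul_pos_right (lt_of_le_of_lt (by positivity) hNm) (sq_nonneg lam)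
  have noise : N * d ≤ lam / 4 * d := by
    have hN_sq : N ^ 2 ≤ (lam / 4) ^ 2 := by
      refine le_of_mul_le_mul_right ?_ hd_pos
      nlinarith [mul_le_mul_of_nonneg_left hdm (sq_nonneg N)]
    exact mul_le_mul_of_nonneg_right (abs_le_of_sq_le_sq' hN_sq (by positivity)).2 hd
  have energy : ℓ ≤ 2 / 5 * (lam * d) := by
    refine le_of_mul_le_mul_left ?_ hlam
    linarith
  have noise_multiplier : N * √(m * d) ≤ lam / 4 * d := by
    refine (abs_le_of_sq_le_sq' ?_ (by positivity)).2
    rw [mul_pow, Real.sq_sqrt (by positivity)]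
    nlinarith [mul_le_mul_of_nonneg_right hNm.le hd]
  linarith [mul_pos hlam hd_pos]

lemma rank_le_of_le_one (hn : n ≤ 1) (Y : Matrix (Fin n × Fin r) (Fin p) ℝ) :
    Y.rank ≤ r := by
  refine Y.rank_le_card_height.trans ?_
  simpa using Nat.mul_le_mul_right r hn

lemma IsSecondOrderCritical.rank_le (hp : r + 2 < p) (hL : IsLaplacian L)
    (hlam : HasSpectralGap L lam) (hlam₀ : 0 < lam) (hΔ : Δᵀ = Δ)
    (hY : IsSecondOrderCritical (L ⊗ₖ 1 - Δ) Y) :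
    (Y.rank : ℝ) ≤ r + 5 * (2 * ((p : ℝ) + r - 2) / ((p : ℝ) - r - 2)) ^ 2 *
      (opNorm Δ / lam) ^ 2 * (r * n) := by
  obtain ⟨d, U, V, hU, hUV, hBU, hrank⟩ := exists_orthonormal_columns_range_ker Y
    (of fun (a : Fin r) (q : Fin n × Fin r) => if a = q.2 then (1 : ℝ) else 0)
  have hsum (a : Fin r) (c : Fin d) : ∑ i, U (i, a) c = 0 := by
    simpa [mul_apply, Fintype.sum_prod_type] using congrFun (congrFun hBU a) c
  have hdm : (d : ℝ) ≤ r * n := by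
    have h := card_le_card_of_transpose_mul_self hU
    rw [Fintype.card_fin, Fintype.card_prod, Fintype.card_fin, Fintype.card_fin, mul_comm] at h
    exact_mod_cast h
  have he : (0 : ℝ) < p - r - 2 := by
    have : (r : ℝ) + 2 < p := mod_cast hp
    linarith
  have hC : 2 ≤ 2 * ((p : ℝ) + r - 2) / ((p : ℝ) - r - 2) := by
    rw [le_div_iff₀ he]
    linarith [r.cast_nonneg (α := ℝ)]
  have energy := hY.mul_trace_kronecker_le_noise hL hlam hlam₀.le hp.le hΔ
  have hd := le_of_mul_le_add_add_sqrt hlam₀ d.cast_nonneg hdm hC (by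
    refine le_of_mul_le_mul_left ?_ (pow_pos he 2)
    refine (le_of_eq_of_le (by ring) energy).trans_eq ?_
    field_simp
    ring) (mul_card_le_of_Smat_mul_eq_zero hL hlam hY.1 hY.2.1 hU hUV hsum)
  have hrank' : (Y.rank : ℝ) ≤ d + r := by
    rw [Fintype.card_fin] at hrank
    exact_mod_cast hrank
  linarith

end Rank

section Optimality

variable {n r p : ℕ} {M : Matrix (Fin n × Fin r) (Fin n × Fin r) ℝ}
  {Y : Matrix (Fin n × Fin r) (Fin p) ℝ}

lemma exists_mulVec_eq_zero_of_rank_lt {ι κ : Type*} [Fintype κ] (A : Matrix ι κ ℝ)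
    (hA : A.rank < Fintype.card κ) : ∃ u, u ≠ 0 ∧ A *ᵥ u = 0 := by
  by_contra! h
  have injective : Function.Injective A.mulVecLin :=
    (injective_iff_map_eq_zero A.mulVecLin).2 fun u hu => by_contra fun hu₀ => h u hu₀ hu
  exact hA.ne <| (LinearMap.finrank_range_of_inj injective).trans <|
    Module.finrank_fintype_fun_eq_card ℝ

lemma IsSecondOrderCritical.posSemidef_Smat (hY : IsSecondOrderCritical M Y) (hM : Mᵀ = M)
    (hrank : Y.rank < p) :
    (Smat M Y).PosSemidef := by
  obtain ⟨u, hu, hYu⟩ := exists_mulVec_eq_zero_of_rank_lt Y (by simpa using hrank)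
  refine .of_dotProduct_mulVec_nonneg ?_ fun x => ?_
  · rw [IsHermitian, conjTranspose_eq_transpose_of_trivial, Smat, transpose_sub, hM, SBD_transpose]
  have annihilates : vecMulVec x u * Yᵀ = 0 := by
    rw [vecMulVec_mul, vecMul_transpose, hYu, vecMulVec_zero]
  have tangent (i : Fin n) : blk (vecMulVec x u) i * (blk Y i)ᵀ = 0 := by
    rw [← block_mul_transpose, annihilates]
    rfl
  have hess := hY.2.2 (vecMulVec x u) fun i => by
    rw [tangent, zero_add, ← transpose_eq_zero, transpose_mul, transpose_transpose, tangent]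
  have value : (Smat M Y * vecMulVec x u * (vecMulVec x u)ᵀ).trace =
      (u ⬝ᵥ u) * (x ⬝ᵥ Smat M Y *ᵥ x) := by
    rw [mul_vecMulVec, transpose_vecMulVec, vecMulVec_mul_vecMulVec, trace_vecMulVec,
      dotProduct_smul, smul_eq_mul, dotProduct_comm x]
  rw [value] at hess
  exact nonneg_of_mul_nonneg_right hess (by simpa using dotProduct_star_self_pos_iff.2 hu)

lemma ip_gram_le_of_posSemidef_Smat (hS : (Smat M Y).PosSemidef)
    {X : Matrix (Fin n × Fin r) (Fin n × Fin r) ℝ} (hX : SDPFeasible X) :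
    ip M (Y * Yᵀ) ≤ ip M X := by
  obtain ⟨hX_psd, hX_diag⟩ := hX
  have hX_symm : Xᵀ = X := hX_psd.isHermitian
  have h := trace_mul_nonneg_of_posSemidef hS hX_psd
  have diagonal (i : Fin n) : block X i i = (1 : ℝ) • 1 := by
    rw [block_self_eq_one_of_SBD_eq_one hX_symm hX_diag, one_smul]
  rw [Smat, Matrix.sub_mul, trace_sub, trace_SBD_mul _ diagonal, one_mul, sub_nonneg,
    Matrix.mul_assoc] at h
  rwa [ip, ip, transpose_mul, transpose_transpose, hX_symm]

end Optimality

section Gauge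

variable {n r p : ℕ} {Z : Fin n → Matrix (Fin r) (Fin r) ℝ}
  {M : Matrix (Fin n × Fin r) (Fin n × Fin r) ℝ} {Y : Matrix (Fin n × Fin r) (Fin p) ℝ}

lemma Smat_Dmat_conj (hZ : ∀ i, Z i * (Z i)ᵀ = 1)
    (M : Matrix (Fin n × Fin r) (Fin n × Fin r) ℝ) (Y : Matrix (Fin n × Fin r) (Fin p) ℝ) :
    Smat ((Dmat Z)ᵀ * M * Dmat Z) ((Dmat Z)ᵀ * Y) = (Dmat Z)ᵀ * Smat M Y * Dmat Z := by
  have gram : (Dmat Z)ᵀ * M * Dmat Z * ((Dmat Z)ᵀ * Y) * ((Dmat Z)ᵀ * Y)ᵀ =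
      (Dmat Z)ᵀ * (M * Y * Yᵀ) * Dmat Z := by
    rw [Matrix.mul_assoc _ (Dmat Z), ← Matrix.mul_assoc (Dmat Z), Dmat_mul_transpose_self hZ,
      Matrix.one_mul, transpose_mul, transpose_transpose]
    simp only [Matrix.mul_assoc]
  rw [Smat, gram, SBD_Dmat_conj, Smat, Matrix.mul_sub, Matrix.sub_mul]

lemma Feasible.transpose_Dmat_mul (hZ : ∀ i, Z i * (Z i)ᵀ = 1) (hY : Feasible Y) :
    Feasible ((Dmat Z)ᵀ * Y) := fun i => by
  rw [Dmat_transpose, blk_Dmat_mul, transpose_mul, transpose_transpose, Matrix.mul_assoc,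
    ← Matrix.mul_assoc (blk Y i), hY i, Matrix.one_mul, mul_eq_one_comm.1 (hZ i)]

lemma IsSecondOrderCritical.transpose_Dmat_mul (hZ : ∀ i, Z i * (Z i)ᵀ = 1)
    (hY : IsSecondOrderCritical M Y) :
    IsSecondOrderCritical ((Dmat Z)ᵀ * M * Dmat Z) ((Dmat Z)ᵀ * Y) := by
  obtain ⟨hfeas, hcrit, hess⟩ := hY
  refine ⟨hfeas.transpose_Dmat_mul hZ, ?_, fun W hW => ?_⟩
  · rw [Smat_Dmat_conj hZ, Matrix.mul_assoc, ← Matrix.mul_assoc (Dmat Z),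
      Dmat_mul_transpose_self hZ, Matrix.one_mul, Matrix.mul_assoc, hcrit, Matrix.mul_zero]
  · have tangent (i : Fin n) : blk (Dmat Z * W) i * (blk Y i)ᵀ +
        blk Y i * (blk (Dmat Z * W) i)ᵀ = 0 := by
      have h := congrArg (fun T => Z i * T * (Z i)ᵀ) (hW i)
      simp only [Dmat_transpose, blk_Dmat_mul, transpose_mul, transpose_transpose, Matrix.mul_add,
        Matrix.add_mul, Matrix.mul_zero, Matrix.zero_mul, Matrix.mul_assoc, hZ i,
        Matrix.mul_one] at h ⊢
      rwa [← Matrix.mul_assoc (Z i) (Z i)ᵀ, hZ i, Matrix.one_mul] at h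
    have h := hess (Dmat Z * W) tangent
    rw [transpose_mul, ← Matrix.mul_assoc, trace_mul_comm] at h
    rw [Smat_Dmat_conj hZ]
    simpa only [Matrix.mul_assoc] using h

lemma transpose_Dmat_mul_LZmat_sub_mul_Dmat (hZ : ∀ i, Z i * (Z i)ᵀ = 1)
    (L : Matrix (Fin n) (Fin n) ℝ) (Δ : Matrix (Fin n × Fin r) (Fin n × Fin r) ℝ) :
    (Dmat Z)ᵀ * (LZmat L Z - Δ) * Dmat Z = L ⊗ₖ 1 - (Dmat Z)ᵀ * Δ * Dmat Z := by
  have hQ := mul_eq_one_comm.1 (Dmat_mul_transpose_self hZ)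
  rw [Matrix.mul_sub, Matrix.sub_mul, LZmat]
  congr 1
  rw [← Matrix.mul_assoc, ← Matrix.mul_assoc, hQ, Matrix.one_mul, Matrix.mul_assoc, hQ,
    Matrix.mul_one]

lemma rank_transpose_Dmat_mul (hZ : ∀ i, Z i * (Z i)ᵀ = 1)
    (Y : Matrix (Fin n × Fin r) (Fin p) ℝ) : ((Dmat Z)ᵀ * Y).rank = Y.rank :=
  rank_mul_eq_right_of_isUnit_det _ _ <|
    (isUnit_iff_isUnit_det _).1 (.of_mul_eq_one _ (mul_eq_one_comm.1 (Dmat_mul_transpose_self hZ)))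

lemma LZmat_transpose {L : Matrix (Fin n) (Fin n) ℝ} (hL : L.IsSymm)
    (Z : Fin n → Matrix (Fin r) (Fin r) ℝ) : (LZmat L Z)ᵀ = LZmat L Z := by
  rw [LZmat, transpose_mul, transpose_mul, transpose_transpose, ← Matrix.mul_assoc,
    ← kroneckerMap_transpose, hL, transpose_one]

end Gauge

theorem noisy_rank_bound_and_optimality_general {n r p : ℕ} (hp : r + 2 < p)
    {L : Matrix (Fin n) (Fin n) ℝ} (hL : IsLaplacian L)
    (hconn : ∀ x : Fin n → ℝ, L *ᵥ x = 0 → ∀ i j, x i = x j)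
    {Zb : Fin n → Matrix (Fin r) (Fin r) ℝ} (hZb : ∀ i, Zb i * (Zb i)ᵀ = 1)
    {Δ : Matrix (Fin n × Fin r) (Fin n × Fin r) ℝ} (hΔsym : Δᵀ = Δ)
    {Y : Matrix (Fin n × Fin r) (Fin p) ℝ} (hY : IsSecondOrderCritical (LZmat L Zb - Δ) Y) :
    let Cp : ℝ := 2 * ((p : ℝ) + r - 2) / ((p : ℝ) - r - 2)
    (Y.rank : ℝ) ≤ r + 5 * Cp ^ 2 * (opNorm Δ / lam2 L) ^ 2 * (r * n) ∧
      (r + 5 * Cp ^ 2 * (opNorm Δ / lam2 L) ^ 2 * (r * n) < (p : ℝ) →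
        (∀ Y' : Matrix (Fin n × Fin r) (Fin p) ℝ, Feasible Y' →
          ip (LZmat L Zb - Δ) (Y * Yᵀ) ≤ ip (LZmat L Zb - Δ) (Y' * Y'ᵀ)) ∧
        ∀ X : Matrix (Fin n × Fin r) (Fin n × Fin r) ℝ, SDPFeasible X →
          ip (LZmat L Zb - Δ) (Y * Yᵀ) ≤ ip (LZmat L Zb - Δ) X) := by
  intro Cp
  have rank_le : (Y.rank : ℝ) ≤ r + 5 * Cp ^ 2 * (opNorm Δ / lam2 L) ^ 2 * (r * n) := by
    rcases le_or_gt n 1 with hn | hn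
    · have h : (Y.rank : ℝ) ≤ r := mod_cast rank_le_of_le_one hn Y
      exact h.trans (le_add_of_nonneg_right (by positivity))
    have hY' := hY.transpose_Dmat_mul hZb
    rw [transpose_Dmat_mul_LZmat_sub_mul_Dmat hZb] at hY'
    have h := hY'.rank_le hp hL (hasSpectralGap_lam2 hL.posSemidef)
      (lam2_pos hn hL.posSemidef hconn) (by simp [hΔsym, Matrix.mul_assoc])
    rwa [rank_transpose_Dmat_mul hZb,
      opNorm_transpose_mul_mul (Dmat_mul_transpose_self hZb)] at h
  refine ⟨rank_le, fun hlt => ?_⟩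
  have hS := hY.posSemidef_Smat (by simp [LZmat_transpose hL.isSymm, hΔsym])
    (mod_cast rank_le.trans_lt hlt)
  exact ⟨fun Y' hY' => ip_gram_le_of_posSemidef_Smat hS hY'.sdpFeasible,
    fun X hX => ip_gram_le_of_posSemidef_Smat hS hX⟩

/-- **Theorem 1.2 (rank bound and global optimality under noise).**  Suppose `G` is connected and
`p > r + 2`, and set `C_p = 2(p + r − 2)/(p − r − 2)`.  Then every second-order critical point `Y`
of the rank-`p` problem satisfies `rank Y ≤ r + 5 C_p² (‖Δ‖/λ₂)² r n`.  If moreover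
`p > r + 5 C_p² (‖Δ‖/λ₂)² r n`, then `Y` is a global minimizer of the rank-`p` problem and
`Y Yᵀ` is an optimal solution of the SDP relaxation. -/
theorem noisy_rank_bound_and_optimality
    (n r p : ℕ) (hn : 1 ≤ n) (hr : 1 ≤ r) (hrp : r ≤ p) (hp : r + 2 < p)
    (G : SimpleGraph (Fin n)) [DecidableRel G.Adj] (hG : G.Connected)
    (Zb : Fin n → Matrix (Fin r) (Fin r) ℝ) (hZb : ∀ i, Zb i * (Zb i)ᵀ = 1)
    (Δ : Matrix (Fin n × Fin r) (Fin n × Fin r) ℝ) (hΔsym : Δᵀ = Δ)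
    (hΔsupp : ∀ q q' : Fin n × Fin r, ¬ G.Adj q.1 q'.1 → Δ q q' = 0)
    (Lhat : Matrix (Fin n × Fin r) (Fin n × Fin r) ℝ)
    (hLhat : Lhat = LZmat (G.lapMatrix ℝ) Zb - Δ)
    (Cp : ℝ) (hCp : Cp = 2 * ((p : ℝ) + r - 2) / ((p : ℝ) - r - 2))
    (Y : Matrix (Fin n × Fin r) (Fin p) ℝ)
    (hY : IsSecondOrderCritical Lhat Y) :
    (Y.rank : ℝ) ≤ r + 5 * Cp ^ 2 * (opNorm Δ / lam2 (G.lapMatrix ℝ)) ^ 2 * (r * n) ∧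
    ((r + 5 * Cp ^ 2 * (opNorm Δ / lam2 (G.lapMatrix ℝ)) ^ 2 * (r * n) < (p : ℝ)) →
      (∀ Y' : Matrix (Fin n × Fin r) (Fin p) ℝ, Feasible Y' →
        ip Lhat (Y * Yᵀ) ≤ ip Lhat (Y' * Y'ᵀ)) ∧
      (∀ X : Matrix (Fin n × Fin r) (Fin n × Fin r) ℝ, SDPFeasible X →
        ip Lhat (Y * Yᵀ) ≤ ip Lhat X)) := by
  subst hLhat hCp
  exact noisy_rank_bound_and_optimality_general hp (isLaplacian_lapMatrix G)
    (fun _ hx i j =>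
      G.lapMatrix_mulVec_eq_zero_iff_forall_reachable.1 hx i j (hG.preconnected i j))
    hZb hΔsym hY

end SyncPaper
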